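/- Let p ≥ 3 be an odd integer. In ℚ(s₁, s₂), writing t₁ = s₁², t₂ = s₂², s₃ = (s₁s₂)^{−1} and t₃ = s₃², the following identity holds: Θ_{p,2}(s₁, s₂, s₃) = (1/((t₁+1)(t₂+1)(t₃+1))) · ( ((p−1)/2)·(t₁^p + t₁^{−p} + t₂^p + t₂^{−p} + t₃^p + t₃^{−p}) − (t₁^{p−1} − t₁^{−(p−1)})/(t₁ − t₁^{−1}) − (t₂^{p−1} − t₂^{−(p−1)})/(t₂ − t₂^{−1}) − (t₃^{p−1} − t₃^{−(p−1)})/(t₃ − t₃^{−1}) ). -/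

import Mathlib

/-- `Δ_{p,q}(s) = ((s^{pq} − s^{−pq})(s − s^{−1})) / ((s^p − s^{−p})(s^q − s^{−q}))`,
the Alexander polynomial of the `(p,q)` torus knot evaluated at `t = s²`. -/
noncomputable def torusDelta {F : Type*} [Field F] (p q : ℕ) (s : F) : F :=
  ((s ^ (p * q) - s⁻¹ ^ (p * q)) * (s - s⁻¹)) / ((s ^ p - s⁻¹ ^ p) * (s ^ q - s⁻¹ ^ q))

/-- `φ_{p,q}(s) = (s^p + s^{−p})/(s^p − s^{−p}) − q·(s^{pq} + s^{−pq})/(s^{pq} − s^{−pq})`. -/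
noncomputable def torusPhi {F : Type*} [Field F] (p q : ℕ) (s : F) : F :=
  (s ^ p + s⁻¹ ^ p) / (s ^ p - s⁻¹ ^ p) -
    (q : F) * ((s ^ (p * q) + s⁻¹ ^ (p * q)) / (s ^ (p * q) - s⁻¹ ^ (p * q)))

/-- `ψ_{p,q}(s) = Δ_{p,q}(s)·φ_{p,q}(s)`. -/
noncomputable def torusPsi {F : Type*} [Field F] (p q : ℕ) (s : F) : F :=
  torusDelta p q s * torusPhi p q s

/-- The 2-loop polynomial of the torus knot `T(p,q)`:
`Θ_{p,q}(s₁,s₂,s₃) = −(1/4)·Σ_{(i,j,k)} ψ_{p,q}(s_i)·ψ_{q,p}(s_j)·Δ_{p,q}(s_k)`,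
the sum running over all six permutations `(i,j,k)` of `(1,2,3)`. -/
noncomputable def torusTheta {F : Type*} [Field F] (p q : ℕ) (s₁ s₂ s₃ : F) : F :=
  -(1/4) * (torusPsi p q s₁ * torusPsi q p s₂ * torusDelta p q s₃
    + torusPsi p q s₁ * torusPsi q p s₃ * torusDelta p q s₂
    + torusPsi p q s₂ * torusPsi q p s₁ * torusDelta p q s₃
    + torusPsi p q s₂ * torusPsi q p s₃ * torusDelta p q s₁
    + torusPsi p q s₃ * torusPsi q p s₁ * torusDelta p q s₂
    + torusPsi p q s₃ * torusPsi q p s₂ * torusDelta p q s₁)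

/-- The reduced 2-loop polynomial of the torus knot `T(p,q)`:
`Θ̂_{p,q}(s) = ψ_{p,q}(s)·ψ_{q,p}(s) / (2(s − s^{−1})²)`. -/
noncomputable def torusThetaHat {F : Type*} [Field F] (p q : ℕ) (s : F) : F :=
  torusPsi p q s * torusPsi q p s / (2 * (s - s⁻¹) ^ 2)

section TorusTwo

variable {F : Type*} [Field F]

lemma sub_inv_ne_zero_of_sq_ne_one {x : F} (hx : x ≠ 0) (h : x ^ 2 ≠ 1) : x - x⁻¹ ≠ 0 := by
  intro h0
  apply h
  field_simp at h0
  linear_combination h0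

lemma add_inv_ne_zero_of_pow_four_ne_one {x : F} (hx : x ≠ 0) (h : x ^ 4 ≠ 1) :
    x + x⁻¹ ≠ 0 := by
  intro h0
  apply h
  field_simp at h0
  linear_combination (x ^ 2 - 1) * h0

lemma pow_sub_inv_pow_ne_zero {s : F} (hs : s ≠ 0) (h : ∀ n, 0 < n → s ^ n ≠ 1) {n : ℕ}
    (hn : 0 < n) : s ^ n - (s ^ n)⁻¹ ≠ 0 :=
  sub_inv_ne_zero_of_sq_ne_one (pow_ne_zero n hs) (by rw [← pow_mul]; exact h _ (by omega))

lemma pow_add_inv_pow_ne_zero {s : F} (hs : s ≠ 0) (h : ∀ n, 0 < n → s ^ n ≠ 1) {n : ℕ}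
    (hn : 0 < n) : s ^ n + (s ^ n)⁻¹ ≠ 0 :=
  add_inv_ne_zero_of_pow_four_ne_one (pow_ne_zero n hs) (by rw [← pow_mul]; exact h _ (by omega))

lemma torusDelta_comm (p q : ℕ) (s : F) : torusDelta p q s = torusDelta q p s := by
  simp only [torusDelta, mul_comm p q, mul_comm (s ^ p - s⁻¹ ^ p)]

lemma torusDelta_two {p : ℕ} (hp : 0 < p) {s : F} (hs : s ≠ 0)
    (h : ∀ n, 0 < n → s ^ n ≠ 1) :
    torusDelta p 2 s = (s ^ p + (s ^ p)⁻¹) / (s + s⁻¹) := by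
  have h1 := pow_sub_inv_pow_ne_zero hs h hp
  have h2 := pow_sub_inv_pow_ne_zero hs h one_pos
  have h3 := pow_add_inv_pow_ne_zero hs h one_pos
  rw [pow_one] at h2 h3
  have e : s ^ 2 - s⁻¹ ^ 2 = (s + s⁻¹) * (s - s⁻¹) := by ring
  rw [torusDelta, e, pow_mul, pow_mul, inv_pow s p, div_eq_div_iff (by positivity) h3]
  ring

lemma torusPsi_two_right {p : ℕ} (hp : 0 < p) {s : F} (hs : s ≠ 0)
    (h : ∀ n, 0 < n → s ^ n ≠ 1) :
    torusPsi p 2 s = -(s ^ p - (s ^ p)⁻¹) / (s + s⁻¹) := by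
  have h1 := pow_sub_inv_pow_ne_zero hs h hp
  have h2 := pow_add_inv_pow_ne_zero hs h hp
  have h3 := pow_add_inv_pow_ne_zero hs h one_pos
  rw [pow_one] at h3
  have hphi : torusPhi p 2 s = -(s ^ p - (s ^ p)⁻¹) / (s ^ p + (s ^ p)⁻¹) := by
    rw [torusPhi, pow_mul, pow_mul, inv_pow s p]
    generalize s ^ p = a at *
    have e : a ^ 2 - a⁻¹ ^ 2 = (a + a⁻¹) * (a - a⁻¹) := by ring
    rw [e]
    generalize a⁻¹ = b at *
    field_simp
    push_cast
    ring
  rw [torusPsi, torusDelta_two hp hs h, hphi]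
  generalize s ^ p - (s ^ p)⁻¹ = m at *
  generalize s ^ p + (s ^ p)⁻¹ = a at *
  field_simp

lemma torusPsi_two_left {p : ℕ} (hp : 0 < p) {s : F} (hs : s ≠ 0)
    (h : ∀ n, 0 < n → s ^ n ≠ 1) :
    torusPsi 2 p s =
      ((s ^ p + (s ^ p)⁻¹) * ((s ^ 2 + (s ^ 2)⁻¹) / (s ^ 2 - (s ^ 2)⁻¹)) -
        p * (((s ^ p) ^ 2 + (s ^ p)⁻¹ ^ 2) / (s ^ p - (s ^ p)⁻¹))) / (s + s⁻¹) := by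
  have h1 := pow_sub_inv_pow_ne_zero hs h hp
  have h2 := pow_add_inv_pow_ne_zero hs h hp
  have h3 := pow_add_inv_pow_ne_zero hs h one_pos
  have h4 := pow_sub_inv_pow_ne_zero hs h two_pos
  rw [pow_one] at h3
  rw [torusPsi, torusDelta_comm, torusDelta_two hp hs h, torusPhi, mul_comm 2 p, pow_mul, pow_mul,
    inv_pow s p, inv_pow s 2]
  have e : (s ^ p) ^ 2 - (s ^ p)⁻¹ ^ 2 = (s ^ p + (s ^ p)⁻¹) * (s ^ p - (s ^ p)⁻¹) := by ring
  rw [e]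
  generalize (s ^ p)⁻¹ = b at *
  generalize s ^ p = a at *
  generalize (s ^ 2)⁻¹ = d at *
  generalize s ^ 2 = c at *
  generalize s + s⁻¹ = w at *
  field_simp

/-- The numerator of `ψ_{2,p}(s)`, multiplied by the sum over both orders of the numerators of
`ψ_{p,2}` and `Δ_{p,2}` at the other two variables; here `b`, `c` are the `p`-th powers of these. -/
lemma psi_two_symmetrised [NeZero (2 : F)] {p : ℕ} (hp : 0 < p) {s b c : F} (hs : s ≠ 0)
    (h : ∀ n, 0 < n → s ^ n ≠ 1) (hbc : s ^ p * b * c = 1) :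
    ((s ^ p + (s ^ p)⁻¹) * ((s ^ 2 + (s ^ 2)⁻¹) / (s ^ 2 - (s ^ 2)⁻¹)) -
        p * (((s ^ p) ^ 2 + (s ^ p)⁻¹ ^ 2) / (s ^ p - (s ^ p)⁻¹))) *
      ((b - b⁻¹) * (c + c⁻¹) + (c - c⁻¹) * (b + b⁻¹)) =
    4 * (((p : F) - 1) / 2 * ((s ^ 2) ^ p + (s ^ 2)⁻¹ ^ p) -
      ((s ^ 2) ^ (p - 1) - (s ^ 2)⁻¹ ^ (p - 1)) / (s ^ 2 - (s ^ 2)⁻¹)) := by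
  have h2 : (2 : F) ≠ 0 := two_ne_zero
  have h1 := pow_sub_inv_pow_ne_zero hs h hp
  have h4 := pow_sub_inv_pow_ne_zero hs h two_pos
  have hs2 : s ^ 2 ≠ 0 := pow_ne_zero _ hs
  have e1 : (b - b⁻¹) * (c + c⁻¹) + (c - c⁻¹) * (b + b⁻¹) = -2 * (s ^ p - (s ^ p)⁻¹) := by
    have hbc' : b * c = (s ^ p)⁻¹ := eq_inv_of_mul_eq_one_right (by rw [← hbc]; ring)
    have hbc'' : b⁻¹ * c⁻¹ = s ^ p := by rw [← mul_inv, hbc', inv_inv]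
    linear_combination 2 * hbc' - 2 * hbc''
  have e2 : (s ^ 2) ^ (p - 1) = (s ^ p) ^ 2 * (s ^ 2)⁻¹ := by
    rw [eq_mul_inv_iff_mul_eq₀ hs2, ← pow_succ, Nat.sub_add_cancel hp, pow_right_comm]
  rw [e1, inv_pow _ (p - 1), inv_pow _ p, e2, pow_right_comm s 2 p, mul_inv, inv_inv]
  simp only [← inv_pow (s ^ p) 2]
  generalize (s ^ p)⁻¹ = a' at *
  generalize s ^ p = a at *
  generalize (s ^ 2)⁻¹ = t' at *
  generalize s ^ 2 = t at *
  field_simp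
  ring

lemma symmetrised_sum_eq (h4 : (4 : F) ≠ 0) {u v w am ap bm bp cm cp k : F}
    {L M N X X' Y Y' Z Z' A B C : F} (hu : u ≠ 0) (hv : v ≠ 0) (hw : w ≠ 0)
    (hL : L * (bm * cp + cm * bp) = 4 * (k * (X + X') - A))
    (hM : M * (am * cp + cm * ap) = 4 * (k * (Y + Y') - B))
    (hN : N * (am * bp + bm * ap) = 4 * (k * (Z + Z') - C)) :
    -(1 / 4) * (-am / u * (M / v) * (cp / w) + -am / u * (N / w) * (bp / v)
      + -bm / v * (L / u) * (cp / w) + -bm / v * (N / w) * (ap / u)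
      + -cm / w * (L / u) * (bp / v) + -cm / w * (M / v) * (ap / u)) =
    1 / (u * v * w) * (k * (X + X' + Y + Y' + Z + Z') - A - B - C) := by
  field_simp
  linear_combination hL + hM + hN

lemma torusTheta_two_eq [NeZero (2 : F)] {p : ℕ} (hp : 0 < p) {x y z : F} (hxyz : x * y * z = 1)
    (hx : ∀ n, 0 < n → x ^ n ≠ 1) (hy : ∀ n, 0 < n → y ^ n ≠ 1)
    (hz : ∀ n, 0 < n → z ^ n ≠ 1) :
    torusTheta p 2 x y z =
      (1 / ((x ^ 2 + 1) * (y ^ 2 + 1) * (z ^ 2 + 1))) *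
        ((((p : F) - 1) / 2) *
            ((x ^ 2) ^ p + (x ^ 2)⁻¹ ^ p + (y ^ 2) ^ p + (y ^ 2)⁻¹ ^ p
              + (z ^ 2) ^ p + (z ^ 2)⁻¹ ^ p) -
          ((x ^ 2) ^ (p - 1) - (x ^ 2)⁻¹ ^ (p - 1)) / (x ^ 2 - (x ^ 2)⁻¹) -
          ((y ^ 2) ^ (p - 1) - (y ^ 2)⁻¹ ^ (p - 1)) / (y ^ 2 - (y ^ 2)⁻¹) -
          ((z ^ 2) ^ (p - 1) - (z ^ 2)⁻¹ ^ (p - 1)) / (z ^ 2 - (z ^ 2)⁻¹)) := by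
  have h2 : (2 : F) ≠ 0 := two_ne_zero
  have h4 : (4 : F) ≠ 0 := by
    have : (4 : F) = 2 * 2 := by norm_num
    rw [this]
    exact mul_ne_zero h2 h2
  have hx0 : x ≠ 0 := by rintro rfl; simp at hxyz
  have hy0 : y ≠ 0 := by rintro rfl; simp at hxyz
  have hz0 : z ≠ 0 := by rintro rfl; simp at hxyz
  have hpow : x ^ p * y ^ p * z ^ p = 1 := by rw [← mul_pow, ← mul_pow, hxyz, one_pow]
  have ex := psi_two_symmetrised hp hx0 hx hpow
  have ey := psi_two_symmetrised hp hy0 hy (b := x ^ p) (c := z ^ p)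
    (by rw [← hpow]; ring)
  have ez := psi_two_symmetrised hp hz0 hz (b := x ^ p) (c := y ^ p)
    (by rw [← hpow]; ring)
  have hden : (x ^ 2 + 1) * (y ^ 2 + 1) * (z ^ 2 + 1) = (x + x⁻¹) * (y + y⁻¹) * (z + z⁻¹) := by
    field_simp
    linear_combination ((x ^ 2 + 1) * (y ^ 2 + 1) * (z ^ 2 + 1)) * hxyz
  rw [hden, torusTheta, torusPsi_two_right hp hx0 hx, torusPsi_two_right hp hy0 hy,
    torusPsi_two_right hp hz0 hz, torusPsi_two_left hp hx0 hx, torusPsi_two_left hp hy0 hy,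
    torusPsi_two_left hp hz0 hz, torusDelta_two hp hx0 hx, torusDelta_two hp hy0 hy,
    torusDelta_two hp hz0 hz]
  exact symmetrised_sum_eq h4 (pow_one x ▸ pow_add_inv_pow_ne_zero hx0 hx one_pos)
    (pow_one y ▸ pow_add_inv_pow_ne_zero hy0 hy one_pos)
    (pow_one z ▸ pow_add_inv_pow_ne_zero hz0 hz one_pos) ex ey ez

end TorusTwo

lemma algebraMap_pow_ne_one_of_eval {σ K : Type*} [Field K]
    [Algebra (MvPolynomial σ ℚ) K] [IsFractionRing (MvPolynomial σ ℚ) K]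
    (f : MvPolynomial σ ℚ) (v : σ → ℚ) (hf : 1 < MvPolynomial.eval v f) (n : ℕ) (hn : 0 < n) :
    algebraMap (MvPolynomial σ ℚ) K f ^ n ≠ 1 := by
  intro h
  rw [← map_pow, ← map_one (algebraMap (MvPolynomial σ ℚ) K)] at h
  have h' := congrArg (MvPolynomial.eval v) (IsFractionRing.injective (MvPolynomial σ ℚ) K h)
  rw [map_pow, map_one] at h'
  exact (one_lt_pow₀ hf hn.ne').ne' h'

/-- Example: the 2-loop polynomial of the `(p,2)` torus knot, for odd `p ≥ 3`.
In `ℚ(s₁,s₂)`, with `t_i = s_i²` and `s₃ = (s₁s₂)⁻¹`,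
`Θ_{p,2}(s₁,s₂,s₃) = (1/((t₁+1)(t₂+1)(t₃+1))) · ( ((p−1)/2)·(t₁^p + t₁^{−p} + t₂^p + t₂^{−p}
  + t₃^p + t₃^{−p}) − Σᵢ (tᵢ^{p−1} − tᵢ^{−(p−1)})/(tᵢ − tᵢ⁻¹) )`. -/
theorem torusTheta_p2_formula (p : ℕ) (hp : 3 ≤ p) (hodd : Odd p) :
    ∀ s₁ s₂ : FractionRing (MvPolynomial (Fin 2) ℚ),
      s₁ = algebraMap (MvPolynomial (Fin 2) ℚ) _ (MvPolynomial.X 0) →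
      s₂ = algebraMap (MvPolynomial (Fin 2) ℚ) _ (MvPolynomial.X 1) →
      ∀ s₃ t₁ t₂ t₃ : FractionRing (MvPolynomial (Fin 2) ℚ),
        s₃ = (s₁ * s₂)⁻¹ → t₁ = s₁ ^ 2 → t₂ = s₂ ^ 2 → t₃ = s₃ ^ 2 →
        torusTheta p 2 s₁ s₂ s₃ =
          (1 / ((t₁ + 1) * (t₂ + 1) * (t₃ + 1))) *
            ((((p : FractionRing (MvPolynomial (Fin 2) ℚ)) - 1) / 2) *
                (t₁ ^ p + t₁⁻¹ ^ p + t₂ ^ p + t₂⁻¹ ^ p + t₃ ^ p + t₃⁻¹ ^ p) -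
              (t₁ ^ (p - 1) - t₁⁻¹ ^ (p - 1)) / (t₁ - t₁⁻¹) -
              (t₂ ^ (p - 1) - t₂⁻¹ ^ (p - 1)) / (t₂ - t₂⁻¹) -
              (t₃ ^ (p - 1) - t₃⁻¹ ^ (p - 1)) / (t₃ - t₃⁻¹)) := by
  rintro s₁ s₂ h₁ h₂ s₃ t₁ t₂ t₃ h₃ rfl rfl rfl
  have hn₁ : ∀ n, 0 < n → s₁ ^ n ≠ 1 := fun n hn ↦
    h₁ ▸ algebraMap_pow_ne_one_of_eval _ (fun _ ↦ 2) (by simp) n hn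
  have hn₂ : ∀ n, 0 < n → s₂ ^ n ≠ 1 := fun n hn ↦
    h₂ ▸ algebraMap_pow_ne_one_of_eval _ (fun _ ↦ 2) (by simp) n hn
  have hn₁₂ : ∀ n, 0 < n → (s₁ * s₂) ^ n ≠ 1 := fun n hn ↦ by
    rw [h₁, h₂, ← map_mul]
    exact algebraMap_pow_ne_one_of_eval _ (fun _ ↦ 2) (by norm_num) n hn
  have hn₃ : ∀ n, 0 < n → s₃ ^ n ≠ 1 := fun n hn ↦ by
    rw [h₃, inv_pow, ne_eq, inv_eq_one]
    exact hn₁₂ n hn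
  have h0 : s₁ * s₂ ≠ 0 := by
    rw [h₁, h₂]
    simp
  exact torusTheta_two_eq (by omega) (by rw [h₃, mul_inv_cancel₀ h0]) hn₁ hn₂ hn₃
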